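/- Let (f_λ)_{λ∈𝔻^n} be a holomorphic family of rational maps of the Riemann sphere of degree d ≥ 2 which is weakly stable. Then the holomorphic motion is well defined at every point p_0 of the closure J*_0 of the set of periodic points of f_0: for every sequence (p_0^n)_n of periodic points of f_0 converging to p_0, the sequence of holomorphic maps (λ ↦ p^n_λ)_n converges. -/

import Mathlib

open Filter Topology Polynomial Set OnePoint
open scoped Classical

noncomputable section

/-- The Riemann sphere, as the one-point compactification of `ℂ`. -/
abbrev Sphere := OnePoint ℂ

/-- The finite part of a point of the sphere (junk value `0` at `∞`). -/
def toC : Sphere → ℂ := Function.extend (fun z : ℂ => (z : Sphere)) id fun _ => 0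

/-- The inversion `z ↦ 1/z` of the Riemann sphere. -/
def sphInv : Sphere → Sphere := fun x =>
  if x = ((0 : ℂ) : Sphere) then ∞
  else if x = ∞ then ((0 : ℂ) : Sphere)
  else (((toC x)⁻¹ : ℂ) : Sphere)

/-- The rational map on the Riemann sphere induced by a pair of polynomials `p/q`. -/
def ratEval (p q : ℂ[X]) : Sphere → Sphere := fun x =>
  if x = ∞ then
    (if q.degree < p.degree then ∞
     else if p.degree < q.degree then ((0 : ℂ) : Sphere)
     else ((p.leadingCoeff / q.leadingCoeff : ℂ) : Sphere))
  else
    (if q.eval (toC x) = 0 then ∞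
     else ((p.eval (toC x) / q.eval (toC x) : ℂ) : Sphere))

/-- A rational map of degree `d`, given by a pair of coprime polynomials. -/
structure RatMap (d : ℕ) where
  p : ℂ[X]
  q : ℂ[X]
  coprime : IsCoprime p q
  deg : max p.natDegree q.natDegree = d

/-- The induced self-map of the Riemann sphere. -/
def RatMap.toFun {d : ℕ} (F : RatMap d) : Sphere → Sphere := ratEval F.p F.q

/-- Two rational maps are `δ`-close if all their coefficients are `δ`-close. -/
def ratClose {d : ℕ} (δ : ℝ) (F G : RatMap d) : Prop :=
  ∀ i : ℕ, ‖F.p.coeff i - G.p.coeff i‖ ≤ δ ∧ ‖F.q.coeff i - G.q.coeff i‖ ≤ δ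

/-- The `n`-th iterate of a self-map of the sphere, read in the finite chart. -/
def iterC (f : Sphere → Sphere) (n : ℕ) : ℂ → ℂ := fun w => toC (f^[n] ↑w)

/-- The conjugate of `f` by the inversion of the sphere. -/
def conjInv (f : Sphere → Sphere) : Sphere → Sphere := sphInv ∘ f ∘ sphInv

/-- All periodic points of `f : Sphere → Sphere` are hyperbolic: the multiplier of each
cycle (computed in the affine chart at a finite point of the cycle, or in the chart at
`∞` for the fixed point `∞`) has modulus `≠ 1`. -/
def HypPeriodic (f : Sphere → Sphere) : Prop :=
  ∀ x ∈ Function.periodicPts f, ∀ n : ℕ, 0 < n → f^[n] x = x →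
    (x = ∞ → ‖deriv (iterC (conjInv f) n) 0‖ ≠ 1) ∧
    (x ≠ ∞ → ‖deriv (iterC f n) (toC x)‖ ≠ 1)

/-- A rational map is weakly stable if every sufficiently close rational map (of the
same degree) has only hyperbolic periodic points. -/
def WeaklyStable {d : ℕ} (F : RatMap d) : Prop :=
  ∃ δ > 0, ∀ G : RatMap d, ratClose δ F G → HypPeriodic G.toFun

/-- The open unit polydisk in `ℂⁿ`. -/
def polydisk (n : ℕ) : Set (Fin n → ℂ) := {l | ∀ i, ‖l i‖ < 1}

/-- A family of rational maps parametrized by `λ ∈ 𝔻ⁿ` is holomorphic if all its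
coefficients depend holomorphically on the parameter. -/
def HoloFamily {d n : ℕ} (F : (Fin n → ℂ) → RatMap d) : Prop :=
  ∀ i : ℕ, DifferentiableOn ℂ (fun l => (F l).p.coeff i) (polydisk n) ∧
    DifferentiableOn ℂ (fun l => (F l).q.coeff i) (polydisk n)

/-- A map from the parameters to the sphere is holomorphic on `s`: it is continuous and
holomorphic in the affine charts. -/
def HoloSphere {n : ℕ} (u : (Fin n → ℂ) → Sphere) (s : Set (Fin n → ℂ)) : Prop :=
  ContinuousOn u s ∧ ∀ l ∈ s,
    (u l ≠ ∞ → DifferentiableWithinAt ℂ (toC ∘ u) s l) ∧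
    (u l = ∞ → DifferentiableWithinAt ℂ (toC ∘ sphInv ∘ u) s l)


open Metric in
/-- A zero-free holomorphic function on a disk has a holomorphic logarithm with any prescribed
admissible value at the centre. -/
theorem exists_log_on_ball {f : ℂ → ℂ} {R : ℝ} (hR : 0 < R)
    (hf : DifferentiableOn ℂ f (ball 0 R)) (h0 : ∀ z ∈ ball (0 : ℂ) R, f z ≠ 0)
    {a : ℂ} (ha : Complex.exp a = f 0) :
    ∃ h : ℂ → ℂ, DifferentiableOn ℂ h (ball 0 R) ∧ h 0 = a ∧
      ∀ z ∈ ball (0 : ℂ) R, f z = Complex.exp (h z) := by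
  have hd : DifferentiableOn ℂ (fun z => deriv f z / f z) (ball 0 R) :=
    (hf.deriv isOpen_ball).div hf h0
  obtain ⟨h, hh0, hh⟩ := hd.isExactOn_ball.with_val_at 0 a
  have hmem : (0 : ℂ) ∈ ball (0 : ℂ) R := mem_ball_self hR
  refine ⟨h, fun z hz => (hh z hz).differentiableAt.differentiableWithinAt, hh0, fun z hz => ?_⟩
  have key : ∀ x ∈ ball (0 : ℂ) R,
      HasDerivAt (fun z => f z * Complex.exp (-h z)) 0 x := by
    intro x hx
    have h1 := (hf.differentiableAt (isOpen_ball.mem_nhds hx)).hasDerivAt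
    have h2 := ((hh x hx).neg).cexp
    refine (h1.mul h2).congr_deriv ?_
    field_simp [h0 x hx]
    ring
  have hc := (convex_ball (0 : ℂ) R).is_const_of_fderivWithin_eq_zero (𝕜 := ℂ)
    (f := fun z => f z * Complex.exp (-h z))
    (fun x hx => (key x hx).differentiableAt.differentiableWithinAt)
    (fun x hx => by
      rw [fderivWithin_of_isOpen isOpen_ball hx]
      ext
      simp [(key x hx).hasFDerivAt.fderiv]) hmem hz
  simp only [hh0, ← ha, Complex.exp_neg] at hc
  rw [mul_inv_cancel₀ (Complex.exp_ne_zero _)] at hc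
  field_simp at hc
  exact hc.symm

open Metric in
/-- A weak form of Bloch's theorem: if the image of a holomorphic function on a disk contains no
disk of radius `2`, then its derivative at the centre is bounded. -/
theorem norm_deriv_mul_le_of_omits {g : ℂ → ℂ} {a : ℂ} {ρ r : ℝ} (hr : 0 < r) (hrρ : r < ρ)
    (hg : DifferentiableOn ℂ g (ball a ρ))
    (hom : ∀ w : ℂ, ∃ v ∈ ball w 2, ∀ z ∈ ball a ρ, g z ≠ v) :
    ‖deriv g a‖ * r ≤ 96 := by
  have hsub : closedBall a r ⊆ ball a ρ := closedBall_subset_ball hrρ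
  have hdg : DifferentiableOn ℂ (deriv g) (ball a ρ) := hg.deriv isOpen_ball
  have hcont : ContinuousOn (fun z => ‖deriv g z‖ * (r - dist z a)) (closedBall a r) :=
    ((hdg.continuousOn.mono hsub).norm).mul (by fun_prop)
  obtain ⟨b, hb, hmax⟩ := (isCompact_closedBall a r).exists_isMaxOn
    ⟨a, mem_closedBall_self hr.le⟩ hcont
  have hNa : ‖deriv g a‖ * r ≤ ‖deriv g b‖ * (r - dist b a) := by
    simpa using hmax (mem_closedBall_self hr.le)
  by_contra! hlt
  set L := ‖deriv g b‖ with hL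
  have hpos : 0 < L * (r - dist b a) := by linarith
  have hLpos : 0 < L := lt_of_le_of_ne (norm_nonneg _) fun h => by simp [← h] at hpos
  have hs : 0 < r - dist b a := pos_of_mul_pos_right hpos hLpos.le
  set s := (r - dist b a) / 2 with hsdef
  have hspos : 0 < s := by positivity
  have hin : ∀ z ∈ closedBall b s, z ∈ closedBall a r := by
    intro z hz
    rw [mem_closedBall] at hz ⊢
    linarith [dist_triangle z b a]
  have hbound : ∀ z ∈ closedBall b s, ‖deriv g z‖ ≤ 2 * L := by
    intro z hz
    have h1 : ‖deriv g z‖ * (r - dist z a) ≤ L * (r - dist b a) := hmax (hin z hz)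
    rw [mem_closedBall] at hz
    have h2 : s ≤ r - dist z a := by linarith [dist_triangle z b a]
    have h3 : ‖deriv g z‖ * s ≤ (2 * L) * s := by
      calc ‖deriv g z‖ * s ≤ ‖deriv g z‖ * (r - dist z a) := by gcongr
        _ ≤ L * (r - dist b a) := h1
        _ = (2 * L) * s := by rw [hsdef]; ring
    exact le_of_mul_le_mul_right h3 hspos
  have hbs : ball b s ⊆ ball a ρ := fun z hz => hsub (hin z (ball_subset_closedBall hz))
  have hschwarz : ∀ z ∈ ball b s, ‖deriv g z - deriv g b‖ ≤ 3 * L / s * dist z b := by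
    intro z hz
    have := Complex.dist_le_div_mul_dist_of_mapsTo_ball (R₂ := 3 * L) (hdg.mono hbs)
      (fun x hx => by
        rw [mem_closedBall, dist_eq_norm]
        calc _ ≤ ‖deriv g x‖ + ‖deriv g b‖ := norm_sub_le _ _
          _ ≤ 2 * L + L := add_le_add (hbound x (ball_subset_closedBall hx)) le_rfl
          _ = 3 * L := by ring) hz
    rwa [dist_eq_norm] at this
  set τ := s / 6 with hτ
  have hτpos : 0 < τ := by positivity
  have hτs : closedBall b τ ⊆ ball b s := closedBall_subset_ball (by rw [hτ]; linarith)
  have hlin : ∀ z ∈ closedBall b τ, ‖g z - g b - deriv g b * (z - b)‖ ≤ L / 2 * ‖z - b‖ := by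
    intro z hz
    have := (convex_closedBall b τ).norm_image_sub_le_of_norm_hasDerivWithin_le
      (f := fun z => g z - deriv g b * z) (f' := fun z => deriv g z - deriv g b) (C := L / 2)
      (fun x hx => by
        have h1 := (hg.differentiableAt (isOpen_ball.mem_nhds (hbs (hτs hx)))).hasDerivAt
        have h2 := (hasDerivAt_id x).const_mul (deriv g b)
        exact ((h1.sub h2).congr_deriv (by simp)).hasDerivWithinAt)
      (fun x hx => by
        refine (hschwarz x (hτs hx)).trans ?_
        rw [mem_closedBall] at hx
        calc 3 * L / s * dist x b ≤ 3 * L / s * τ := by gcongr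
          _ = L / 2 := by rw [hτ]; field_simp; norm_num)
      (mem_closedBall_self hτpos.le) hz
    refine le_trans (le_of_eq ?_) this
    congr 1
    ring
  have hsphere : ∀ z ∈ sphere b τ, L * τ / 2 ≤ ‖g z - g b‖ := by
    intro z hz
    have h1 := hlin z (sphere_subset_closedBall hz)
    have h2 : ‖z - b‖ = τ := by rwa [mem_sphere, dist_eq_norm] at hz
    have h3 : ‖deriv g b * (z - b)‖ ≤ ‖g z - g b‖ + ‖g z - g b - deriv g b * (z - b)‖ := by
      have := norm_sub_le (g z - g b) (g z - g b - deriv g b * (z - b))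
      simpa using this
    rw [norm_mul, h2] at h3
    rw [h2] at h1
    linarith
  have hfreq : ∃ᶠ z in 𝓝 b, g z ≠ g b := by
    have hd := (hg.differentiableAt (isOpen_ball.mem_nhds (hbs (mem_ball_self hspos)))).hasDerivAt
    have := hd.eventually_ne (c := g b) (norm_ne_zero_iff.mp hLpos.ne')
    exact this.frequently.filter_mono nhdsWithin_le_nhds
  have himage := DiffContOnCl.ball_subset_image_closedBall (f := g) (z₀ := b) (r := τ)
    (hg.diffContOnCl_ball (hτs.trans hbs)) hτpos hsphere hfreq
  obtain ⟨v, hv, hne⟩ := hom (g b)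
  obtain ⟨z, hz, rfl⟩ := himage (by
    rw [mem_ball] at hv ⊢
    refine hv.trans_le ?_
    have : L * τ / 2 / 2 = L * (r - dist b a) / 48 := by rw [hτ, hsdef]; ring
    linarith)
  exact hne z (hbs (hτs hz)) rfl

/-- The points `y + π m i` with `cosh² (y + π m i)` a positive integer are `2`-dense. -/
theorem exists_cosh_sq_eq_nat (w : ℂ) :
    ∃ v ∈ Metric.ball w 2, ∃ k : ℕ, Complex.cosh v ^ 2 = k + 1 := by
  have hreal : ∀ x : ℝ, 0 ≤ x → ∃ y : ℝ, |x - y| ≤ 1 ∧ ∃ k : ℕ, Real.sinh y ^ 2 = k := by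
    intro x hx
    set k := ⌊Real.sinh x ^ 2⌋₊ with hk
    have hsx : 0 ≤ Real.sinh x := Real.sinh_nonneg_iff.2 hx
    have hkle : (k : ℝ) ≤ Real.sinh x ^ 2 := Nat.floor_le (by positivity)
    have hklt : Real.sinh x ^ 2 < k + 1 := Nat.lt_floor_add_one _
    refine ⟨Real.arsinh √k, ?_, k, by rw [Real.sinh_arsinh, Real.sq_sqrt (by positivity)]⟩
    have hle : Real.arsinh √k ≤ x := by
      rw [← Real.arsinh_sinh x, Real.arsinh_le_arsinh]
      exact Real.sqrt_le_iff.2 ⟨hsx, hkle⟩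
    have h0 : 0 ≤ Real.arsinh √k := Real.arsinh_nonneg_iff.2 (Real.sqrt_nonneg _)
    rw [abs_of_nonneg (by linarith)]
    rcases le_total x 1 with h1 | h1
    · linarith
    · have : x - 1 ≤ Real.arsinh √k := by
        rw [← Real.arsinh_sinh (x - 1), Real.arsinh_le_arsinh]
        refine Real.le_sqrt_of_sq_le ?_
        have hs1 : 1 ≤ Real.sinh 1 := Real.self_le_sinh_iff.2 zero_le_one
        have hsy : 0 ≤ Real.sinh (x - 1) := Real.sinh_nonneg_iff.2 (by linarith)
        have hadd : Real.sinh (x - 1) + 1 ≤ Real.sinh x := by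
          have : Real.sinh x = Real.sinh ((x - 1) + 1) := by ring_nf
          rw [this, Real.sinh_add]
          nlinarith [Real.one_le_cosh 1, Real.one_le_cosh (x - 1)]
        nlinarith
      linarith
  have hreal' : ∃ y : ℝ, |w.re - y| ≤ 1 ∧ ∃ k : ℕ, Real.sinh y ^ 2 = k := by
    rcases le_total 0 w.re with h | h
    · exact hreal _ h
    · obtain ⟨y, hy, k, hk⟩ := hreal (-w.re) (by linarith)
      refine ⟨-y, ?_, k, by simpa using hk⟩
      rw [← abs_neg]
      convert hy using 2
      ring
  obtain ⟨y, hy, k, hk⟩ := hreal'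
  set m : ℤ := round (w.im / Real.pi) with hm
  have hπ := Real.pi_pos
  have him : |w.im - m * Real.pi| ≤ Real.pi / 2 := by
    have h1 := abs_sub_round (w.im / Real.pi)
    have h2 : w.im - m * Real.pi = (w.im / Real.pi - m) * Real.pi := by field_simp
    rw [h2, abs_mul, abs_of_pos hπ]
    nlinarith
  refine ⟨y + (m * Real.pi : ℝ) * Complex.I, ?_, k, ?_⟩
  · rw [Metric.mem_ball, dist_comm, dist_eq_norm, ← sq_lt_sq₀ (norm_nonneg _) (by norm_num),
      Complex.sq_norm, Complex.normSq_apply]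
    simp only [Complex.sub_re, Complex.sub_im, Complex.add_re, Complex.add_im, Complex.mul_re,
      Complex.mul_im, Complex.ofReal_re, Complex.ofReal_im, Complex.I_re, Complex.I_im]
    have h1 := sq_le_sq' (abs_le.1 hy).1 (abs_le.1 hy).2
    have h2 := sq_le_sq' (abs_le.1 him).1 (abs_le.1 him).2
    have h3 := Real.pi_lt_d2
    nlinarith
  · rw [Complex.cosh_add, Complex.cosh_mul_I, Complex.sinh_mul_I, ← Complex.ofReal_cos,
      ← Complex.ofReal_sin, Real.sin_int_mul_pi, ← Complex.ofReal_cosh]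
    have h1 : Real.cos (m * Real.pi) ^ 2 = 1 := by
      have := Real.sin_sq_add_cos_sq (m * Real.pi)
      rwa [Real.sin_int_mul_pi, zero_pow two_ne_zero, zero_add] at this
    have h2 := Real.cosh_sq y
    rw [hk] at h2
    simp only [Complex.ofReal_zero, zero_mul, mul_zero, add_zero, mul_pow]
    norm_cast
    rw [h1, h2, mul_one]
    push_cast
    rfl

open Metric in
/-- **Schottky's theorem**: a holomorphic function on a disk omitting `0` and `1` is bounded on
smaller disks in terms of its value at the centre. -/
theorem exists_schottky_bound {R r : ℝ} (hr : 0 ≤ r) (hrR : r < R) (K : ℝ) :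
    ∃ M : ℝ, ∀ f : ℂ → ℂ, DifferentiableOn ℂ f (ball 0 R) →
      (∀ z ∈ ball (0 : ℂ) R, f z ≠ 0) → (∀ z ∈ ball (0 : ℂ) R, f z ≠ 1) →
      |Real.log ‖f 0‖| ≤ K → ∀ z ∈ closedBall (0 : ℂ) r, ‖f z‖ ≤ M := by
  have hR : 0 < R := hr.trans_lt hrR
  set δ := (R - r) / 2 with hδ
  have hδpos : 0 < δ := by rw [hδ]; linarith
  set K' := K + Real.pi with hK'
  set C := 96 / δ * r with hC
  refine ⟨Real.exp (2 * Real.pi * (2 * (K' + 1) * Real.exp C) ^ 2), ?_⟩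
  intro f hf hf0 hf1 hK z hz
  have hmem : (0 : ℂ) ∈ ball (0 : ℂ) R := mem_ball_self hR
  have hπ := Real.pi_pos
  obtain ⟨h, hhd, hh0, hh⟩ := exists_log_on_ball hR hf hf0 (Complex.exp_log (hf0 0 hmem))
  set G : ℂ → ℂ := fun z => h z / (2 * Real.pi * Complex.I) with hG
  have hGd : DifferentiableOn ℂ G (ball 0 R) := hhd.div_const _
  have hfG : ∀ z ∈ ball (0 : ℂ) R, f z = Complex.exp (2 * Real.pi * Complex.I * G z) := by
    intro z hz
    rw [hh z hz, hG]
    congr 1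
    field_simp
  have hGint : ∀ z ∈ ball (0 : ℂ) R, ∀ k : ℤ, G z ≠ k := by
    intro z hz k hk
    apply hf1 z hz
    rw [hfG z hz, hk, mul_comm, Complex.exp_int_mul_two_pi_mul_I]
  have hG0 : ‖G 0‖ ≤ K' := by
    have h1 : ‖h 0‖ ≤ K' := by
      rw [hh0]
      refine (Complex.norm_le_abs_re_add_abs_im _).trans ?_
      rw [Complex.log_re, Complex.log_im]
      exact add_le_add hK (Complex.abs_arg_le_pi _)
    have h2 : ‖(2 * Real.pi * Complex.I : ℂ)‖ = 2 * Real.pi := by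
      simp [abs_of_pos hπ]
    simp only [hG, norm_div, h2]
    refine (div_le_self (norm_nonneg _) ?_).trans h1
    linarith [Real.pi_gt_three]
  have hK'0 : 0 ≤ K' := (norm_nonneg _).trans hG0
  have hG00 : ∀ z ∈ ball (0 : ℂ) R, G z ≠ 0 := fun z hz => by simpa using hGint z hz 0
  have hG01 : ∀ z ∈ ball (0 : ℂ) R, G z - 1 ≠ 0 := fun z hz => by
    simpa [sub_eq_zero] using hGint z hz 1
  obtain ⟨a, had, -, ha⟩ := exists_log_on_ball hR hGd hG00 (Complex.exp_log (hG00 0 hmem))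
  obtain ⟨b, hbd, -, hb⟩ := exists_log_on_ball hR (hGd.sub_const 1) hG01
    (Complex.exp_log (hG01 0 hmem))
  set A : ℂ → ℂ := fun z => Complex.exp (a z / 2) with hA
  set B : ℂ → ℂ := fun z => Complex.exp (b z / 2) with hB
  have hAsq : ∀ z ∈ ball (0 : ℂ) R, A z ^ 2 = G z := fun z hz => by
    rw [ha z hz, hA, ← Complex.exp_nat_mul]; congr 1; push_cast; ring
  have hBsq : ∀ z ∈ ball (0 : ℂ) R, B z ^ 2 = G z - 1 := fun z hz => by
    rw [hb z hz, hB, ← Complex.exp_nat_mul]; congr 1; push_cast; ring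
  have hAB : ∀ z ∈ ball (0 : ℂ) R, (A z - B z) * (A z + B z) = 1 := fun z hz => by
    linear_combination hAsq z hz - hBsq z hz
  have hABne : ∀ z ∈ ball (0 : ℂ) R, A z - B z ≠ 0 := fun z hz =>
    left_ne_zero_of_mul_eq_one (hAB z hz)
  have hABd : DifferentiableOn ℂ (fun z => A z - B z) (ball 0 R) :=
    (had.div_const 2).cexp.sub (hbd.div_const 2).cexp
  obtain ⟨g, hgd, -, hg⟩ := exists_log_on_ball hR hABd hABne (Complex.exp_log (hABne 0 hmem))
  have hg' : ∀ z ∈ ball (0 : ℂ) R, A z + B z = Complex.exp (-g z) := fun z hz => by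
    rw [Complex.exp_neg, ← hg z hz]
    exact eq_inv_of_mul_eq_one_right (hAB z hz)
  have hcosh : ∀ z ∈ ball (0 : ℂ) R, G z = Complex.cosh (g z) ^ 2 := fun z hz => by
    rw [← hAsq z hz, Complex.cosh, ← hg z hz, ← hg' z hz]
    ring
  have hderiv : ∀ x ∈ closedBall (0 : ℂ) r, ‖deriv g x‖ ≤ 96 / δ := by
    intro x hx
    have hsub : ball x (R - r) ⊆ ball 0 R :=
      ball_subset_ball' (by rw [mem_closedBall] at hx; linarith)
    rw [le_div_iff₀ hδpos]
    refine norm_deriv_mul_le_of_omits (ρ := R - r) hδpos (by rw [hδ]; linarith) (hgd.mono hsub) ?_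
    intro w
    obtain ⟨v, hv, k, hk⟩ := exists_cosh_sq_eq_nat w
    refine ⟨v, hv, fun z hz hzv => hGint z (hsub hz) (k + 1) ?_⟩
    rw [hcosh z (hsub hz), hzv, hk]
    push_cast
    rfl
  have hclosed : closedBall (0 : ℂ) r ⊆ ball 0 R := closedBall_subset_ball hrR
  have hgz : ‖g z - g 0‖ ≤ C := by
    have := (convex_closedBall (0 : ℂ) r).norm_image_sub_le_of_norm_deriv_le
      (fun x hx => hgd.differentiableAt (isOpen_ball.mem_nhds (hclosed hx))) hderiv
      (mem_closedBall_self hr) hz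
    refine this.trans ?_
    rw [hC]
    gcongr
    simpa using hz
  have hA0 : ‖A 0‖ ≤ K' + 1 := by
    have h1 : ‖A 0‖ ^ 2 ≤ K' := by rw [← norm_pow, hAsq 0 hmem]; exact hG0
    nlinarith [norm_nonneg (A 0)]
  have hB0 : ‖B 0‖ ≤ K' + 1 := by
    have h1 : ‖B 0‖ ^ 2 ≤ K' + 1 := by
      rw [← norm_pow, hBsq 0 hmem]
      exact (norm_sub_le _ _).trans (by simpa using hG0)
    nlinarith [norm_nonneg (B 0)]
  have he1 : ‖Complex.exp (g 0)‖ ≤ 2 * (K' + 1) := by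
    rw [← hg 0 hmem]
    linarith [norm_sub_le (A 0) (B 0)]
  have he2 : ‖Complex.exp (-g 0)‖ ≤ 2 * (K' + 1) := by
    rw [← hg' 0 hmem]
    linarith [norm_add_le (A 0) (B 0)]
  have hexpz : ∀ ε : ℂ, ‖ε‖ = 1 → ‖Complex.exp (ε * g 0)‖ ≤ 2 * (K' + 1) →
      ‖Complex.exp (ε * g z)‖ ≤ 2 * (K' + 1) * Real.exp C := by
    intro ε hε h0
    have : ε * g z = ε * g 0 + ε * (g z - g 0) := by ring
    rw [this, Complex.exp_add, norm_mul]
    refine mul_le_mul h0 ?_ (norm_nonneg _) (by positivity)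
    refine (Complex.norm_exp_le_exp_norm _).trans (Real.exp_le_exp.2 ?_)
    rwa [norm_mul, hε, one_mul]
  have hz1 := hexpz 1 (by simp) (by simpa using he1)
  have hz2 := hexpz (-1) (by simp) (by simpa using he2)
  have hzR := hclosed hz
  have hGz : ‖G z‖ ≤ (2 * (K' + 1) * Real.exp C) ^ 2 := by
    rw [hcosh z hzR, norm_pow]
    gcongr
    rw [Complex.cosh, norm_div]
    have := norm_add_le (Complex.exp (g z)) (Complex.exp (-g z))
    rw [one_mul] at hz1
    rw [neg_one_mul] at hz2
    rw [Complex.norm_ofNat]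
    linarith
  rw [hfG z hzR]
  refine (Complex.norm_exp_le_exp_norm _).trans (Real.exp_le_exp.2 ?_)
  have h2 : ‖(2 * Real.pi * Complex.I : ℂ)‖ = 2 * Real.pi := by simp [abs_of_pos hπ]
  rw [norm_mul, h2]
  gcongr

open Metric in
/-- A Harnack-type inequality for zero-free bounded holomorphic functions. -/
theorem norm_le_rpow_of_zero_free {h : ℂ → ℂ} {R M : ℝ} (hM : 0 < M)
    (hh : DifferentiableOn ℂ h (ball 0 R)) (h0 : ∀ z ∈ ball (0 : ℂ) R, h z ≠ 0)
    (hb : ∀ z ∈ ball (0 : ℂ) R, ‖h z‖ < M) {z : ℂ} (hz : z ∈ ball (0 : ℂ) R) :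
    ‖h z‖ ≤ M * (‖h 0‖ / M) ^ ((1 - ‖z‖ / R) / (1 + ‖z‖ / R)) := by
  have hR : 0 < R := nonempty_ball.1 ⟨z, hz⟩
  have hmem : (0 : ℂ) ∈ ball (0 : ℂ) R := mem_ball_self hR
  obtain ⟨w, hwd, -, hw⟩ := exists_log_on_ball hR hh h0 (Complex.exp_log (h0 0 hmem))
  set v : ℂ → ℂ := fun z => Real.log M - w z with hv
  have hwre : ∀ z ∈ ball (0 : ℂ) R, (w z).re = Real.log ‖h z‖ := fun z hz => by
    rw [hw z hz, Complex.norm_exp, Real.log_exp]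
  have hvre : ∀ z ∈ ball (0 : ℂ) R, (v z).re = Real.log M - Real.log ‖h z‖ := fun z hz => by
    simp only [hv, Complex.sub_re, Complex.ofReal_re, hwre z hz]
  have hvpos : ∀ z ∈ ball (0 : ℂ) R, 0 < (v z).re := fun z hz => by
    rw [hvre z hz]
    exact sub_pos.2 (Real.log_lt_log (norm_pos_iff.2 (h0 z hz)) (hb z hz))
  set a := (v 0).re with ha
  set b := (v 0).im with hbb
  have hapos : 0 < a := hvpos 0 hmem
  set W : ℂ → ℂ := fun z => (v z - b * Complex.I - a) / (v z - b * Complex.I + a) with hW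
  have hden : ∀ z ∈ ball (0 : ℂ) R, v z - b * Complex.I + a ≠ 0 := by
    intro z hz hzero
    have := congrArg Complex.re hzero
    simp at this
    linarith [hvpos z hz]
  have hvd : DifferentiableOn ℂ v (ball 0 R) := hwd.const_sub _
  have hWd : DifferentiableOn ℂ W (ball 0 R) :=
    DifferentiableOn.div ((hvd.sub_const _).sub_const _) ((hvd.sub_const _).add_const _) hden
  have hW0 : W 0 = 0 := by
    have : v 0 - b * Complex.I - a = 0 := by
      apply Complex.ext <;> simp [ha, hbb]
    simp only [hW, this, zero_div]
  have hWle : MapsTo W (ball 0 R) (closedBall (W 0) 1) := by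
    intro x hx
    rw [hW0, mem_closedBall_zero_iff, hW, norm_div]
    refine div_le_one_of_le₀ ?_ (norm_nonneg _)
    rw [← sq_le_sq₀ (norm_nonneg _) (norm_nonneg _), Complex.sq_norm, Complex.sq_norm,
      Complex.normSq_apply, Complex.normSq_apply]
    simp
    nlinarith [hvpos x hx]
  have hS := Complex.dist_le_div_mul_dist_of_mapsTo_ball hWd hWle hz
  rw [hW0, dist_zero_right, dist_zero_right, one_div, inv_mul_eq_div] at hS
  set ρ := ‖z‖ / R with hρ
  have hρ0 : 0 ≤ ρ := by positivity
  have hρ1 : ρ < 1 := by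
    rw [hρ, div_lt_one hR]
    simpa using hz
  simp only [hW, norm_div] at hS
  rw [div_le_iff₀ (norm_pos_iff.2 (hden z hz))] at hS
  have hx := hvpos z hz
  have hkey : a - (v z).re ≤ ρ * ((v z).re + a) := by
    by_contra! hlt
    have h1 : ‖v z - b * Complex.I - a‖ ^ 2 ≤ (ρ * ‖v z - b * Complex.I + a‖) ^ 2 := by
      gcongr
    rw [mul_pow, Complex.sq_norm, Complex.sq_norm, Complex.normSq_apply,
      Complex.normSq_apply] at h1
    simp at h1
    have h2 : (ρ * ((v z).re + a)) ^ 2 < (a - (v z).re) ^ 2 := by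
      have : 0 ≤ ρ * ((v z).re + a) := by positivity
      gcongr
    have h3 : ρ ^ 2 * ((v z).im - b) ^ 2 ≤ ((v z).im - b) ^ 2 :=
      mul_le_of_le_one_left (sq_nonneg _) (pow_le_one₀ hρ0 hρ1.le)
    nlinarith
  have hκ : a * ((1 - ρ) / (1 + ρ)) ≤ (v z).re := by
    rw [← mul_div_assoc, div_le_iff₀ (by positivity)]
    linarith
  have hpos0 : 0 < ‖h 0‖ / M := div_pos (norm_pos_iff.2 (h0 0 hmem)) hM
  rw [← Real.log_le_log_iff (norm_pos_iff.2 (h0 z hz)) (by positivity),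
    Real.log_mul hM.ne' (by positivity), Real.log_rpow hpos0,
    Real.log_div (norm_pos_iff.2 (h0 0 hmem)).ne' hM.ne']
  rw [ha, hvre z hz, hvre 0 hmem] at hκ
  linarith

@[simp]
theorem toC_coe (z : ℂ) : toC (z : Sphere) = z :=
  OnePoint.coe_injective.extend_apply id (fun _ => 0) z

@[simp]
theorem toC_infty : toC ∞ = 0 :=
  Function.extend_apply' _ _ _ (by simp)

theorem coe_toC {x : Sphere} (hx : x ≠ ∞) : ((toC x : ℂ) : Sphere) = x := by
  obtain ⟨z, rfl⟩ := OnePoint.ne_infty_iff_exists.1 hx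
  rw [toC_coe]

@[simp]
theorem sphInv_infty : sphInv ∞ = ((0 : ℂ) : Sphere) := by
  simp [sphInv]

@[simp]
theorem sphInv_zero : sphInv ((0 : ℂ) : Sphere) = ∞ := by
  simp [sphInv]

theorem sphInv_coe {z : ℂ} (hz : z ≠ 0) : sphInv (z : Sphere) = ((z⁻¹ : ℂ) : Sphere) := by
  simp [sphInv, hz]

theorem sphInv_involutive : Function.Involutive sphInv := by
  intro x
  induction x using OnePoint.rec with
  | infty => simp
  | coe z =>
    rcases eq_or_ne z 0 with rfl | hz
    · simp
    · rw [sphInv_coe hz, sphInv_coe (inv_ne_zero hz), inv_inv]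

/-- The projection from homogeneous coordinates to the sphere. -/
def ofHom (v : ℂ × ℂ) : Sphere := if v.2 = 0 then ∞ else ((v.1 / v.2 : ℂ) : Sphere)

/-- The determinant of two vectors of `ℂ²`. -/
def det2 (v w : ℂ × ℂ) : ℂ := v.1 * w.2 - v.2 * w.1

theorem ofHom_coe (z : ℂ) : ofHom (z, 1) = (z : Sphere) := by simp [ofHom]

theorem toC_ofHom (v : ℂ × ℂ) : toC (ofHom v) = v.1 / v.2 := by
  unfold ofHom
  split_ifs with h <;> simp [h]

theorem ofHom_swap {v : ℂ × ℂ} (hv : v ≠ 0) : ofHom v.swap = sphInv (ofHom v) := by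
  obtain ⟨x, y⟩ := v
  simp only [ofHom, Prod.swap]
  rcases eq_or_ne y 0 with rfl | hy
  · have hx : x ≠ 0 := fun h => hv (by simp [h])
    simp [hx]
  · rcases eq_or_ne x 0 with rfl | hx
    · simp [hy]
    · simp [hx, hy, sphInv_coe (div_ne_zero hx hy)]

theorem ofHom_eq_iff {v w : ℂ × ℂ} (hv : v ≠ 0) (hw : w ≠ 0) :
    ofHom v = ofHom w ↔ det2 v w = 0 := by
  obtain ⟨x, y⟩ := v
  obtain ⟨x', y'⟩ := w
  simp only [ofHom, det2, ne_eq, Prod.mk_eq_zero, not_and] at *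
  rcases eq_or_ne y 0 with rfl | hy
  · have hx : x ≠ 0 := fun h => hv h rfl
    rcases eq_or_ne y' 0 with rfl | hy'
    · simp
    · simp [hx, hy']
  · rcases eq_or_ne y' 0 with rfl | hy'
    · have hx : x' ≠ 0 := fun h => hw h rfl
      simp [hx, hy]
    · simp only [hy, hy', if_false, OnePoint.coe_eq_coe]
      rw [div_eq_div_iff hy hy', sub_eq_zero, mul_comm y x']

theorem eventually_ne_infty (z : ℂ) : ∀ᶠ x in 𝓝 (z : Sphere), x ≠ ∞ :=
  isOpen_ne.mem_nhds (by simp)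

theorem continuousAt_toC (z : ℂ) : ContinuousAt toC (z : Sphere) := by
  rw [OnePoint.continuousAt_coe]
  have : toC ∘ ((↑) : ℂ → Sphere) = id := by
    ext z
    simp
  rw [this]
  exact continuousAt_id

theorem continuousAt_toC_sphInv_infty : ContinuousAt (toC ∘ sphInv) ∞ := by
  rw [OnePoint.continuousAt_infty']
  simp only [Function.comp_apply, sphInv_infty, toC_coe, coclosedCompact_eq_cocompact,
    ← Metric.cobounded_eq_cocompact]
  refine (tendsto_inv₀_cobounded (α := ℂ)).congr fun z => ?_
  rcases eq_or_ne z 0 with rfl | hz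
  · simp
  · simp [sphInv_coe hz]

/-- Near any point, the sphere has a continuous lift to homogeneous coordinates. -/
theorem exists_continuous_lift (x : Sphere) :
    ∃ s : Sphere → ℂ × ℂ, ContinuousAt s x ∧ ∀ᶠ y in 𝓝 x, s y ≠ 0 ∧ ofHom (s y) = y := by
  induction x using OnePoint.rec with
  | infty =>
    refine ⟨fun y => (1, toC (sphInv y)), continuousAt_const.prodMk continuousAt_toC_sphInv_infty,
      ?_⟩
    have : ∀ᶠ y in 𝓝 (∞ : Sphere), y ≠ ((0 : ℂ) : Sphere) := isOpen_ne.mem_nhds (by simp)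
    filter_upwards [this] with y hy
    refine ⟨by simp, ?_⟩
    induction y using OnePoint.rec with
    | infty => simp [ofHom]
    | coe z =>
      have hz : z ≠ 0 := fun h => hy (by rw [h])
      simp [ofHom, sphInv_coe hz, hz]
  | coe z =>
    refine ⟨fun y => (toC y, 1), (continuousAt_toC z).prodMk continuousAt_const, ?_⟩
    filter_upwards [eventually_ne_infty z] with y hy
    exact ⟨by simp, by rw [ofHom_coe, coe_toC hy]⟩

theorem continuousAt_ofHom {v : ℂ × ℂ} (hv : v ≠ 0) : ContinuousAt ofHom v := by
  have main : ∀ w : ℂ × ℂ, w.2 ≠ 0 → ContinuousAt ofHom w := by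
    intro w hw
    have h1 : ContinuousAt (fun u : ℂ × ℂ => ((u.1 / u.2 : ℂ) : Sphere)) w :=
      OnePoint.continuous_coe.continuousAt.comp
        (continuousAt_fst.div continuousAt_snd hw)
    refine h1.congr ?_
    filter_upwards [continuousAt_snd.eventually_ne hw] with u hu
    simp [ofHom, hu]
  by_cases h2 : v.2 = 0
  · have h1 : v.1 ≠ 0 := fun h => hv (Prod.ext h h2)
    have hinf : ContinuousAt sphInv ((0 : ℂ) : Sphere) := by
      rw [OnePoint.continuousAt_coe, ← continuousWithinAt_compl_self]
      have : Tendsto (fun z : ℂ => ((z⁻¹ : ℂ) : Sphere)) (𝓝[≠] 0) (𝓝 ∞) := by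
        have h := (tendsto_inv₀_nhdsNE_zero (α := ℂ))
        rw [Metric.cobounded_eq_cocompact, ← coclosedCompact_eq_cocompact] at h
        exact (OnePoint.tendsto_coe_infty (X := ℂ)).comp h
      simp only [ContinuousWithinAt, Function.comp_apply, sphInv_zero]
      refine this.congr' ?_
      filter_upwards [self_mem_nhdsWithin] with z hz
      exact (sphInv_coe hz).symm
    have h3 : ContinuousAt (fun u : ℂ × ℂ => sphInv (ofHom u.swap)) v := by
      have h4 : ofHom v.swap = ((0 : ℂ) : Sphere) := by simp [ofHom, h1, h2]
      have h5 : ContinuousAt (fun u : ℂ × ℂ => ofHom u.swap) v :=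
        (main v.swap h1).comp continuous_swap.continuousAt
      exact ContinuousAt.comp (by rw [h4]; exact hinf) h5
    refine h3.congr ?_
    filter_upwards [isOpen_ne.mem_nhds hv] with u hu
    rw [ofHom_swap hu, sphInv_involutive]
  · exact main v h2

/-- The standard homogeneous coordinates of a point of the sphere. -/
def stdLift (x : Sphere) : ℂ × ℂ := if x = ∞ then (1, 0) else (toC x, 1)

theorem stdLift_ne_zero (x : Sphere) : stdLift x ≠ 0 := by
  unfold stdLift
  split_ifs <;> simp

theorem ofHom_stdLift (x : Sphere) : ofHom (stdLift x) = x := by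
  unfold stdLift
  split_ifs with h
  · simp [ofHom, h]
  · rw [ofHom_coe, coe_toC h]

theorem exists_smul_stdLift {v : ℂ × ℂ} (hv : v ≠ 0) :
    ∃ c : ℂ, c ≠ 0 ∧ v = c • stdLift (ofHom v) := by
  by_cases h : v.2 = 0
  · refine ⟨v.1, fun h1 => hv (Prod.ext h1 h), ?_⟩
    ext <;> simp [ofHom, stdLift, h]
  · refine ⟨v.2, h, ?_⟩
    ext
    · simp [ofHom, stdLift, h, mul_div_cancel₀]
    · simp [ofHom, stdLift, h]

/-- The cross-ratio of four vectors of `ℂ²`. -/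
def crossHom (z a b c : ℂ × ℂ) : ℂ := det2 z a * det2 b c / (det2 z c * det2 b a)

/-- The cross-ratio of four points of the sphere, sending `a, b, c` to `0, 1, ∞`. -/
def crossRatio (z a b c : Sphere) : ℂ :=
  crossHom (stdLift z) (stdLift a) (stdLift b) (stdLift c)

theorem crossRatio_ofHom {z a b c : ℂ × ℂ} (hz : z ≠ 0) (ha : a ≠ 0) (hb : b ≠ 0) (hc : c ≠ 0) :
    crossRatio (ofHom z) (ofHom a) (ofHom b) (ofHom c) = crossHom z a b c := by
  obtain ⟨z', hz', ez⟩ := exists_smul_stdLift hz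
  obtain ⟨a', ha', ea⟩ := exists_smul_stdLift ha
  obtain ⟨b', hb', eb⟩ := exists_smul_stdLift hb
  obtain ⟨c', hc', ec⟩ := exists_smul_stdLift hc
  have hdet : ∀ (s t : ℂ) (v w : ℂ × ℂ), det2 (s • v) (t • w) = s * t * det2 v w := by
    intro s t v w
    simp only [det2, Prod.smul_fst, Prod.smul_snd, smul_eq_mul]
    ring
  conv_rhs => rw [ez, ea, eb, ec]
  simp only [crossRatio, crossHom, hdet]
  rw [show ∀ p q : ℂ, z' * a' * p * (b' * c' * q) = (z' * a' * b' * c') * (p * q) by intros; ring,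
    show ∀ p q : ℂ, z' * c' * p * (b' * a' * q) = (z' * a' * b' * c') * (p * q) by intros; ring,
    mul_div_mul_left _ _ (by simp [*])]

theorem det2_stdLift_ne_zero {x y : Sphere} (h : x ≠ y) : det2 (stdLift x) (stdLift y) ≠ 0 := by
  intro h0
  apply h
  rw [← ofHom_stdLift x, ← ofHom_stdLift y]
  exact (ofHom_eq_iff (stdLift_ne_zero x) (stdLift_ne_zero y)).2 h0

theorem crossRatio_ne_zero {z a b c : Sphere} (hza : z ≠ a) (hzc : z ≠ c) (hba : b ≠ a)
    (hbc : b ≠ c) : crossRatio z a b c ≠ 0 :=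
  div_ne_zero (mul_ne_zero (det2_stdLift_ne_zero hza) (det2_stdLift_ne_zero hbc))
    (mul_ne_zero (det2_stdLift_ne_zero hzc) (det2_stdLift_ne_zero hba))

/-- The inverse of the cross-ratio in its first variable. -/
theorem ofHom_crossRatio {z a b c : Sphere} (hzc : z ≠ c) (hac : a ≠ c) (hba : b ≠ a)
    (hbc : b ≠ c) :
    stdLift a - (crossRatio z a b c * (det2 (stdLift b) (stdLift a) /
      det2 (stdLift b) (stdLift c))) • stdLift c ≠ 0 ∧
    ofHom (stdLift a - (crossRatio z a b c * (det2 (stdLift b) (stdLift a) /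
      det2 (stdLift b) (stdLift c))) • stdLift c) = z := by
  have h1 := det2_stdLift_ne_zero hzc
  have h2 := det2_stdLift_ne_zero hac
  have h3 := det2_stdLift_ne_zero hba
  have h4 := det2_stdLift_ne_zero hbc
  have e : crossRatio z a b c * (det2 (stdLift b) (stdLift a) / det2 (stdLift b) (stdLift c)) =
      det2 (stdLift z) (stdLift a) / det2 (stdLift z) (stdLift c) := by
    simp only [crossRatio, crossHom]
    field_simp
  rw [e]
  have hne : stdLift a - (det2 (stdLift z) (stdLift a) / det2 (stdLift z) (stdLift c)) •
      stdLift c ≠ 0 := by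
    intro h
    apply h2
    rw [sub_eq_zero.1 h]
    simp only [det2, Prod.smul_fst, Prod.smul_snd, smul_eq_mul]
    ring
  refine ⟨hne, ?_⟩
  conv_rhs => rw [← ofHom_stdLift z]
  rw [ofHom_eq_iff hne (stdLift_ne_zero z)]
  simp only [det2, Prod.fst_sub, Prod.snd_sub, Prod.smul_fst, Prod.smul_snd, smul_eq_mul] at h1 ⊢
  field_simp
  ring

theorem crossRatio_injective {z z' a b c : Sphere} (hzc : z ≠ c) (hzc' : z' ≠ c) (hac : a ≠ c)
    (hba : b ≠ a) (hbc : b ≠ c) (h : crossRatio z a b c = crossRatio z' a b c) : z = z' := by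
  rw [← (ofHom_crossRatio hzc hac hba hbc).2, h, (ofHom_crossRatio hzc' hac hba hbc).2]

theorem crossRatio_self {a b c : Sphere} (hba : b ≠ a) (hbc : b ≠ c) :
    crossRatio b a b c = 1 := by
  have h3 := det2_stdLift_ne_zero hba
  have h4 := det2_stdLift_ne_zero hbc
  simp only [crossRatio, crossHom]
  field_simp

theorem continuousAt_crossRatio {z a b c : Sphere} (hzc : z ≠ c) (hba : b ≠ a) :
    ContinuousAt (fun x => crossRatio x a b c) z := by
  obtain ⟨s, hs, hsv⟩ := exists_continuous_lift z
  have hz := hsv.self_of_nhds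
  have hden : det2 (s z) (stdLift c) * det2 (stdLift b) (stdLift a) ≠ 0 := by
    refine mul_ne_zero (fun h => hzc ?_) (det2_stdLift_ne_zero hba)
    rw [← hz.2, ← ofHom_stdLift c]
    exact (ofHom_eq_iff hz.1 (stdLift_ne_zero c)).2 h
  have hc : ContinuousAt (fun x => crossHom (s x) (stdLift a) (stdLift b) (stdLift c)) z := by
    refine ContinuousAt.div ?_ ?_ hden
    · unfold det2
      fun_prop
    · unfold det2
      fun_prop
  refine hc.congr ?_
  filter_upwards [hsv] with x hx
  rw [← crossRatio_ofHom hx.1 (stdLift_ne_zero a) (stdLift_ne_zero b) (stdLift_ne_zero c), hx.2,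
    ofHom_stdLift, ofHom_stdLift, ofHom_stdLift]

/-- Holomorphy at a point of a sphere-valued function of one complex variable, expressed by a local
lift to homogeneous coordinates. -/
def HasHoloLift (u : ℂ → Sphere) (t : ℂ) : Prop :=
  ∃ v : ℂ → ℂ × ℂ, DifferentiableAt ℂ v t ∧ ∀ᶠ s in 𝓝 t, v s ≠ 0 ∧ ofHom (v s) = u s

theorem HasHoloLift.differentiableAt_crossRatio {z a b c : ℂ → Sphere} {t : ℂ}
    (hz : HasHoloLift z t) (ha : HasHoloLift a t) (hb : HasHoloLift b t) (hc : HasHoloLift c t)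
    (hzc : z t ≠ c t) (hba : b t ≠ a t) :
    DifferentiableAt ℂ (fun s => crossRatio (z s) (a s) (b s) (c s)) t := by
  obtain ⟨z', hzd, hz'⟩ := hz
  obtain ⟨a', had, ha'⟩ := ha
  obtain ⟨b', hbd, hb'⟩ := hb
  obtain ⟨c', hcd, hc'⟩ := hc
  have hz0 := hz'.self_of_nhds
  have ha0 := ha'.self_of_nhds
  have hb0 := hb'.self_of_nhds
  have hc0 := hc'.self_of_nhds
  have h1 : det2 (z' t) (c' t) ≠ 0 := by
    rwa [ne_eq, ← ofHom_eq_iff hz0.1 hc0.1, hz0.2, hc0.2]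
  have h2 : det2 (b' t) (a' t) ≠ 0 := by
    rwa [ne_eq, ← ofHom_eq_iff hb0.1 ha0.1, hb0.2, ha0.2]
  have hd : DifferentiableAt ℂ (fun s => crossHom (z' s) (a' s) (b' s) (c' s)) t := by
    refine DifferentiableAt.fun_div ?_ ?_ (mul_ne_zero h1 h2)
    · unfold det2
      fun_prop
    · unfold det2
      fun_prop
  refine hd.congr_of_eventuallyEq ?_
  filter_upwards [hz', ha', hb', hc'] with s hz ha hb hc
  rw [← crossRatio_ofHom hz.1 ha.1 hb.1 hc.1, hz.2, ha.2, hb.2, hc.2]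

open Metric in
/-- Holomorphic functions on a disk that omit `0` and `1` and have pairwise equal or disjoint graphs
converge pointwise as soon as they converge to a nonzero value at the centre. -/
theorem exists_tendsto_of_disjoint_graphs {R : ℝ} {g : ℕ → ℂ → ℂ}
    (hg : ∀ k, DifferentiableOn ℂ (g k) (ball 0 R))
    (h0 : ∀ k, ∀ z ∈ ball (0 : ℂ) R, g k z ≠ 0) (h1 : ∀ k, ∀ z ∈ ball (0 : ℂ) R, g k z ≠ 1)
    (hdisj : ∀ j k, (∃ z ∈ ball (0 : ℂ) R, g j z = g k z) → ∀ z ∈ ball (0 : ℂ) R, g j z = g k z)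
    {w : ℂ} (hw : w ≠ 0) (hlim : Tendsto (fun k => g k 0) atTop (𝓝 w))
    {t : ℂ} (ht : t ∈ ball (0 : ℂ) R) :
    ∃ x, Tendsto (fun k => g k t) atTop (𝓝 x) := by
  have htR : ‖t‖ < R := by simpa using ht
  obtain ⟨r, htr, hrR⟩ := exists_between htR
  have hr : 0 < r := (norm_nonneg t).trans_lt htr
  have hsub : ball (0 : ℂ) r ⊆ ball 0 R := ball_subset_ball hrR.le
  have hlog : Tendsto (fun k => |Real.log ‖g k 0‖|) atTop (𝓝 |Real.log ‖w‖|) :=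
    (hlim.norm.log (norm_ne_zero_iff.2 hw)).abs
  obtain ⟨M, hM⟩ := exists_schottky_bound hr.le hrR (|Real.log ‖w‖| + 1)
  obtain ⟨N, hN⟩ := eventually_atTop.1 (hlog.eventually_le_const (lt_add_one _))
  have hbound : ∀ k ≥ N, ∀ z ∈ ball (0 : ℂ) r, ‖g k z‖ ≤ M := fun k hk z hz =>
    hM (g k) (hg k) (h0 k) (h1 k) (hN k hk) z (ball_subset_closedBall hz)
  have hM0 : 0 ≤ M := (norm_nonneg _).trans (hbound N le_rfl 0 (mem_ball_self hr))
  set M' := 2 * M + 1 with hM'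
  have hM'pos : 0 < M' := by positivity
  set κ := (1 - ‖t‖ / r) / (1 + ‖t‖ / r) with hκ
  have hκpos : 0 < κ := by
    have : ‖t‖ / r < 1 := (div_lt_one hr).2 htr
    exact div_pos (by linarith) (by positivity)
  have hle : ∀ j ≥ N, ∀ k ≥ N, ‖g j t - g k t‖ ≤ M' * (‖g j 0 - g k 0‖ / M') ^ κ := by
    intro j hj k hk
    by_cases hex : ∃ z ∈ ball (0 : ℂ) R, g j z = g k z
    · rw [hdisj j k hex t ht, sub_self, norm_zero]
      positivity
    · push Not at hex
      refine norm_le_rpow_of_zero_free (h := fun z => g j z - g k z) hM'pos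
        (((hg j).sub (hg k)).mono hsub) (fun z hz => sub_ne_zero.2 (hex z (hsub hz)))
        (fun z hz => ?_) (by simpa using htr)
      have := norm_sub_le (g j z) (g k z)
      linarith [hbound j hj z hz, hbound k hk z hz]
  have hψ : Tendsto (fun x : ℝ => M' * (x / M') ^ κ) (𝓝 0) (𝓝 0) := by
    have hc : ContinuousAt (fun x : ℝ => M' * (x / M') ^ κ) 0 :=
      continuousAt_const.mul ((continuousAt_id.div_const M').rpow_const (Or.inr hκpos.le))
    have : M' * ((0 : ℝ) / M') ^ κ = 0 := by rw [zero_div, Real.zero_rpow hκpos.ne', mul_zero]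
    rw [ContinuousAt, this] at hc
    exact hc
  refine cauchySeq_tendsto_of_complete (Metric.cauchySeq_iff.2 fun ε hε => ?_)
  obtain ⟨δ, hδ, hδε⟩ := Metric.tendsto_nhds_nhds.1 hψ ε hε
  obtain ⟨N', hN'⟩ := Metric.cauchySeq_iff.1 hlim.cauchySeq δ hδ
  refine ⟨max N N', fun j hj k hk => ?_⟩
  have hd := hN' j ((le_max_right _ _).trans hj) k ((le_max_right _ _).trans hk)
  rw [dist_eq_norm] at hd ⊢
  refine (hle j ((le_max_left _ _).trans hj) k ((le_max_left _ _).trans hk)).trans_lt ?_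
  have := hδε (x := ‖g j 0 - g k 0‖) (by simpa using hd)
  rw [dist_zero_right] at this
  exact (le_abs_self _).trans_lt this

open Metric in
/-- The λ-lemma on a disk: sphere-valued holomorphic functions with pairwise equal or disjoint
graphs converge pointwise as soon as they converge at the centre. -/
theorem exists_tendsto_of_disjoint_sphere_graphs {R : ℝ} {u : ℕ → ℂ → Sphere}
    (hu : ∀ k, ∀ t ∈ ball (0 : ℂ) R, HasHoloLift (u k) t)
    (hdisj : ∀ j k, (∃ t ∈ ball (0 : ℂ) R, u j t = u k t) → ∀ t ∈ ball (0 : ℂ) R, u j t = u k t)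
    {p : Sphere} (hlim : Tendsto (fun k => u k 0) atTop (𝓝 p))
    {t : ℂ} (ht : t ∈ ball (0 : ℂ) R) :
    ∃ x, Tendsto (fun k => u k t) atTop (𝓝 x) := by
  have hmem : (0 : ℂ) ∈ ball (0 : ℂ) R := mem_ball_self (nonempty_ball.1 ⟨t, ht⟩)
  have hne : ∀ j k, u j 0 ≠ u k 0 → ∀ s ∈ ball (0 : ℂ) R, u j s ≠ u k s := fun j k h s hs heq =>
    h (hdisj j k ⟨s, hs, heq⟩ 0 hmem)
  by_cases hthree : ∃ a b c, u a 0 ≠ p ∧ u b 0 ≠ p ∧ u c 0 ≠ p ∧ u b 0 ≠ u a 0 ∧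
      u b 0 ≠ u c 0 ∧ u a 0 ≠ u c 0
  · obtain ⟨a, b, c, hap, hbp, hcp, hba, hbc, hac⟩ := hthree
    have hev : ∀ᶠ k in atTop, u k 0 ≠ u a 0 ∧ u k 0 ≠ u b 0 ∧ u k 0 ≠ u c 0 :=
      (hlim.eventually_ne hap.symm).and
        ((hlim.eventually_ne hbp.symm).and (hlim.eventually_ne hcp.symm))
    obtain ⟨N, hN⟩ := eventually_atTop.1 hev
    have hN' : ∀ k, u (k + N) 0 ≠ u a 0 ∧ u (k + N) 0 ≠ u b 0 ∧ u (k + N) 0 ≠ u c 0 :=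
      fun k => hN _ (Nat.le_add_left _ _)
    have hlim' : Tendsto (fun k => u (k + N) 0) atTop (𝓝 p) := (tendsto_add_atTop_iff_nat N).2 hlim
    obtain ⟨x, hx⟩ := exists_tendsto_of_disjoint_graphs
      (g := fun k s => crossRatio (u (k + N) s) (u a s) (u b s) (u c s)) (R := R)
      (w := crossRatio p (u a 0) (u b 0) (u c 0)) (t := t)
      (fun k s hs => ((hu _ s hs).differentiableAt_crossRatio (hu a s hs) (hu b s hs) (hu c s hs)
        (hne _ _ (hN' k).2.2 s hs) (hne _ _ hba s hs)).differentiableWithinAt)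
      (fun k s hs => crossRatio_ne_zero (hne _ _ (hN' k).1 s hs) (hne _ _ (hN' k).2.2 s hs)
        (hne _ _ hba s hs) (hne _ _ hbc s hs))
      (fun k s hs h => hne _ _ (hN' k).2.1 s hs <| crossRatio_injective
        (hne _ _ (hN' k).2.2 s hs) (hne _ _ hbc s hs) (hne _ _ hac s hs) (hne _ _ hba s hs)
        (hne _ _ hbc s hs)
        (h.trans (crossRatio_self (hne _ _ hba s hs) (hne _ _ hbc s hs)).symm))
      (fun j k ⟨s, hs, h⟩ s' hs' => by
        have := hdisj (j + N) (k + N) ⟨s, hs, crossRatio_injective (hne _ _ (hN' j).2.2 s hs)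
          (hne _ _ (hN' k).2.2 s hs) (hne _ _ hac s hs) (hne _ _ hba s hs)
          (hne _ _ hbc s hs) h⟩ s' hs'
        simp only [this])
      (crossRatio_ne_zero hap.symm hcp.symm hba hbc)
      ((continuousAt_crossRatio hcp.symm hba).tendsto.comp hlim') ht
    set D := det2 (stdLift (u b t)) (stdLift (u a t)) / det2 (stdLift (u b t)) (stdLift (u c t))
      with hD
    have hv : stdLift (u a t) - (x * D) • stdLift (u c t) ≠ 0 := by
      intro h
      apply det2_stdLift_ne_zero (hne _ _ hac t ht)
      rw [sub_eq_zero.1 h]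
      simp only [det2, Prod.smul_fst, Prod.smul_snd, smul_eq_mul]
      ring
    refine ⟨ofHom (stdLift (u a t) - (x * D) • stdLift (u c t)),
      (tendsto_add_atTop_iff_nat N).1 ?_⟩
    have hvlim := tendsto_const_nhds (x := stdLift (u a t)) |>.sub
      ((hx.mul_const D).smul_const (stdLift (u c t)))
    refine ((continuousAt_ofHom hv).tendsto.comp hvlim).congr fun k => ?_
    exact (ofHom_crossRatio (hne _ _ (hN' k).2.2 t ht) (hne _ _ hac t ht) (hne _ _ hba t ht)
      (hne _ _ hbc t ht)).2
  · have hfin : (range (fun k => u k 0) \ {p}).Finite := by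
      by_contra hinf
      obtain ⟨T, hT, hcard⟩ := Set.Infinite.exists_subset_card_eq hinf 3
      obtain ⟨x, y, z, hxy, hxz, hyz, rfl⟩ := Finset.card_eq_three.1 hcard
      obtain ⟨⟨a, rfl⟩, ha⟩ := hT (by simp : x ∈ _)
      obtain ⟨⟨b, rfl⟩, hb⟩ := hT (by simp : y ∈ _)
      obtain ⟨⟨c, rfl⟩, hc⟩ := hT (by simp : z ∈ _)
      exact hthree ⟨a, b, c, ha, hb, hc, hxy.symm, hyz, hxz⟩
    have hev : ∀ᶠ k in atTop, u k 0 = p := by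
      filter_upwards [hlim.eventually (hfin.isClosed.isOpen_compl.mem_nhds (by simp))] with k hk
      by_contra hkp
      exact hk ⟨mem_range_self k, hkp⟩
    obtain ⟨N, hN⟩ := eventually_atTop.1 hev
    refine ⟨u N t, tendsto_const_nhds.congr' ?_⟩
    filter_upwards [eventually_ge_atTop N] with k hk
    exact hdisj N k ⟨0, hmem, by rw [hN N le_rfl, hN k hk]⟩ t ht

/-- The homogeneous lift of a rational map to `ℂ²`. -/
def RatMap.homLift {d : ℕ} (F : RatMap d) (v : ℂ × ℂ) : ℂ × ℂ :=
  (∑ i ∈ Finset.range (d + 1), F.p.coeff i * (v.1 ^ i * v.2 ^ (d - i)),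
    ∑ i ∈ Finset.range (d + 1), F.q.coeff i * (v.1 ^ i * v.2 ^ (d - i)))

theorem sum_coeff_homogeneous {d : ℕ} {p : ℂ[X]} (hp : p.natDegree ≤ d) (x : ℂ) {y : ℂ}
    (hy : y ≠ 0) :
    ∑ i ∈ Finset.range (d + 1), p.coeff i * (x ^ i * y ^ (d - i)) = y ^ d * p.eval (x / y) := by
  rw [Polynomial.eval_eq_sum_range' (Nat.lt_succ_of_le hp), Finset.mul_sum]
  refine Finset.sum_congr rfl fun i hi => ?_
  have hid : i ≤ d := Nat.lt_succ_iff.1 (Finset.mem_range.1 hi)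
  have : y ^ d = y ^ i * y ^ (d - i) := by rw [← pow_add, Nat.add_sub_cancel' hid]
  rw [this, div_pow]
  field_simp

theorem sum_coeff_homogeneous_zero (d : ℕ) (p : ℂ[X]) (x : ℂ) :
    ∑ i ∈ Finset.range (d + 1), p.coeff i * (x ^ i * (0 : ℂ) ^ (d - i)) = p.coeff d * x ^ d := by
  rw [Finset.sum_range_succ, Finset.sum_eq_zero, zero_add]
  · simp
  · intro i hi
    rw [zero_pow (Nat.sub_ne_zero_of_lt (Finset.mem_range.1 hi)), mul_zero, mul_zero]

theorem RatMap.homLift_spec {d : ℕ} (hd : d ≠ 0) (F : RatMap d) {v : ℂ × ℂ} (hv : v ≠ 0) :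
    F.homLift v ≠ 0 ∧ ofHom (F.homLift v) = F.toFun (ofHom v) := by
  obtain ⟨x, y⟩ := v
  have hp : F.p.natDegree ≤ d := (le_max_left _ _).trans F.deg.le
  have hq : F.q.natDegree ≤ d := (le_max_right _ _).trans F.deg.le
  rcases eq_or_ne y 0 with rfl | hy
  · have hx : x ≠ 0 := fun h => hv (by simp [h])
    have hxd : x ^ d ≠ 0 := pow_ne_zero _ hx
    have hH : F.homLift (x, 0) = (F.p.coeff d * x ^ d, F.q.coeff d * x ^ d) := by
      simp only [RatMap.homLift, sum_coeff_homogeneous_zero]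
    have hcoeff : ∀ r : ℂ[X], r.natDegree = d → r.coeff d ≠ 0 := by
      intro r hr
      rw [← hr]
      refine Polynomial.leadingCoeff_ne_zero.2 fun h => hd ?_
      rw [← hr, h, Polynomial.natDegree_zero]
    have hinf : ofHom ((x, 0) : ℂ × ℂ) = ∞ := by simp [ofHom]
    have hdeg : F.p.natDegree = d ∨ F.q.natDegree = d := by
      rcases max_choice F.p.natDegree F.q.natDegree with h | h
      · exact Or.inl (h ▸ F.deg)
      · exact Or.inr (h ▸ F.deg)
    rw [hH, hinf]
    refine ⟨fun h => ?_, ?_⟩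
    · simp only [Prod.mk_eq_zero, mul_eq_zero, hxd, or_false] at h
      rcases hdeg with h' | h'
      · exact hcoeff _ h' h.1
      · exact hcoeff _ h' h.2
    · simp only [RatMap.toFun, ratEval, if_true, ofHom, mul_eq_zero, hxd, or_false]
      by_cases h1 : F.q.degree < F.p.degree
      · have hpd : F.p.natDegree = d := by
          rcases hdeg with h | h
          · exact h
          · exact le_antisymm hp (h.symm.le.trans (Polynomial.natDegree_le_natDegree h1.le))
        have hq0 : F.q.coeff d = 0 := by
          have h3 := Polynomial.degree_eq_natDegree (Polynomial.ne_zero_of_degree_gt h1)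
          rw [hpd] at h3
          exact Polynomial.coeff_eq_zero_of_degree_lt (h1.trans_eq h3)
        simp [h1, hq0]
      · by_cases h2 : F.p.degree < F.q.degree
        · have hqd : F.q.natDegree = d := by
            rcases hdeg with h | h
            · exact le_antisymm hq (h.symm.le.trans (Polynomial.natDegree_le_natDegree h2.le))
            · exact h
          have hp0 : F.p.coeff d = 0 := by
            have h3 := Polynomial.degree_eq_natDegree (Polynomial.ne_zero_of_degree_gt h2)
            rw [hqd] at h3
            exact Polynomial.coeff_eq_zero_of_degree_lt (h2.trans_eq h3)
          simp [h1, h2, hp0, hcoeff _ hqd]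
        · have heq : F.p.natDegree = F.q.natDegree :=
            Polynomial.natDegree_eq_of_degree_eq (le_antisymm (not_lt.1 h1) (not_lt.1 h2))
          have hqd : F.q.natDegree = d := by
            rcases hdeg with h | h
            · exact heq ▸ h
            · exact h
          have hpd : F.p.natDegree = d := heq.trans hqd
          rw [if_neg h1, if_neg h2, if_neg (hcoeff _ hqd), mul_div_mul_right _ _ hxd,
            Polynomial.leadingCoeff, Polynomial.leadingCoeff, hpd, hqd]
  · have hyd : y ^ d ≠ 0 := pow_ne_zero _ hy
    have hH : F.homLift (x, y) = (y ^ d * F.p.eval (x / y), y ^ d * F.q.eval (x / y)) := by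
      simp only [RatMap.homLift, sum_coeff_homogeneous hp x hy, sum_coeff_homogeneous hq x hy]
    have hz : ofHom ((x, y) : ℂ × ℂ) = ((x / y : ℂ) : Sphere) := by simp [ofHom, hy]
    rw [hH, hz]
    refine ⟨fun h => ?_, ?_⟩
    · simp only [Prod.mk_eq_zero, mul_eq_zero, hyd, false_or] at h
      obtain ⟨a, b, hab⟩ := F.coprime
      have := congrArg (Polynomial.eval (x / y)) hab
      simp [h.1, h.2] at this
    · simp only [RatMap.toFun, ratEval, ofHom, OnePoint.coe_ne_infty, if_false, toC_coe,
        mul_eq_zero, hyd, false_or]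
      rw [mul_div_mul_left _ _ hyd]

theorem contDiffAt_homLift {d : ℕ} {F : ℂ → RatMap d} {t₀ : ℂ}
    (hp : ∀ i, ContDiffAt ℂ 1 (fun t => (F t).p.coeff i) t₀)
    (hq : ∀ i, ContDiffAt ℂ 1 (fun t => (F t).q.coeff i) t₀) (v : ℂ × ℂ) :
    ContDiffAt ℂ 1 (fun x : ℂ × (ℂ × ℂ) => (F x.1).homLift x.2) (t₀, v) := by
  have hmon : ∀ i j : ℕ, ContDiffAt ℂ 1
      (fun x : ℂ × (ℂ × ℂ) => x.2.1 ^ i * x.2.2 ^ j) (t₀, v) := fun i j => by fun_prop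
  refine ContDiffAt.prodMk (ContDiffAt.sum fun i _ => ?_) (ContDiffAt.sum fun i _ => ?_)
  · exact (ContDiffAt.comp (t₀, v) (hp i) contDiffAt_fst).mul (hmon _ _)
  · exact (ContDiffAt.comp (t₀, v) (hq i) contDiffAt_fst).mul (hmon _ _)

theorem contDiffAt_iterate {E : Type*} [NormedAddCommGroup E] [NormedSpace ℂ E]
    {H : ℂ → E → E} {t₀ : ℂ}
    (hH : ∀ v, ContDiffAt ℂ 1 (fun x : ℂ × E => H x.1 x.2) (t₀, v)) (m : ℕ) (v : E) :
    ContDiffAt ℂ 1 (fun x : ℂ × E => (H x.1)^[m] x.2) (t₀, v) := by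
  induction m with
  | zero => exact contDiffAt_snd
  | succ m ih =>
    simp only [Function.iterate_succ_apply']
    exact ContDiffAt.comp (t₀, v) (g := fun x : ℂ × E => H x.1 x.2)
      (hH _) (contDiffAt_fst.prodMk ih)

/-- Local uniqueness of the continuation of a fixed point whose multiplier is not `1`. -/
theorem eventually_eq_of_fixed {G : ℂ × ℂ → ℂ} {G' : ℂ × ℂ →L[ℂ] ℂ} {t₀ x : ℂ}
    (hG : HasStrictFDerivAt G G' (t₀, x)) (hμ : G' (0, 1) ≠ 1) {a b : ℂ → ℂ}
    (ha : ContinuousAt a t₀) (hb : ContinuousAt b t₀) (ha0 : a t₀ = x) (hb0 : b t₀ = x)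
    (hfa : ∀ᶠ t in 𝓝 t₀, G (t, a t) = a t) (hfb : ∀ᶠ t in 𝓝 t₀, G (t, b t) = b t) :
    ∀ᶠ t in 𝓝 t₀, a t = b t := by
  have hpos : 0 < ‖1 - G' (0, 1)‖ := norm_pos_iff.2 (sub_ne_zero.2 hμ.symm)
  have ht : Tendsto (fun t => ((t, a t), (t, b t))) (𝓝 t₀) (𝓝 ((t₀, x), (t₀, x))) := by
    have h1 : ContinuousAt (fun t => ((t, a t), (t, b t))) t₀ :=
      (continuousAt_id.prodMk ha).prodMk (continuousAt_id.prodMk hb)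
    simpa [ContinuousAt, ha0, hb0] using h1
  have hlo := (hG.isLittleO.comp_tendsto ht).bound (half_pos hpos)
  filter_upwards [hlo, hfa, hfb] with t hlo hfa hfb
  simp only [Function.comp_apply, hfa, hfb, Prod.mk_sub_mk, sub_self] at hlo
  have hlin : G' (0, a t - b t) = (a t - b t) * G' (0, 1) := by
    rw [← smul_eq_mul, ← _root_.map_smul]
    simp
  have hnorm : ‖((0 : ℂ), a t - b t)‖ = ‖a t - b t‖ := by
    rw [Prod.norm_def, norm_zero, max_eq_right (norm_nonneg _)]
  rw [hlin, hnorm, ← mul_one_sub, norm_mul] at hlo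
  by_contra hne
  have : 0 < ‖a t - b t‖ := norm_pos_iff.2 (sub_ne_zero.2 hne)
  nlinarith

/-- Local uniqueness of the continuation of a finite periodic point with multiplier `≠ 1`. -/
theorem eventually_eq_of_periodic {f : ℂ → Sphere → Sphere} {H : ℂ → ℂ × ℂ → ℂ × ℂ} {t₀ x : ℂ}
    (hH : ∀ t v, v ≠ 0 → H t v ≠ 0 ∧ ofHom (H t v) = f t (ofHom v))
    (hC : ∀ v, ContDiffAt ℂ 1 (fun x : ℂ × (ℂ × ℂ) => H x.1 x.2) (t₀, v)) {m : ℕ}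
    {a b : ℂ → ℂ} (ha : ContinuousAt a t₀) (hb : ContinuousAt b t₀)
    (ha0 : a t₀ = x) (hb0 : b t₀ = x)
    (hfa : ∀ᶠ t in 𝓝 t₀, (f t)^[m] (a t) = (a t : Sphere))
    (hfb : ∀ᶠ t in 𝓝 t₀, (f t)^[m] (b t) = (b t : Sphere))
    (hμ : deriv (iterC (f t₀) m) x ≠ 1) : ∀ᶠ t in 𝓝 t₀, a t = b t := by
  have hiter : ∀ (k : ℕ) t v, v ≠ 0 →
      (H t)^[k] v ≠ 0 ∧ ofHom ((H t)^[k] v) = (f t)^[k] (ofHom v) := by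
    intro k t v hv
    induction k with
    | zero => exact ⟨hv, rfl⟩
    | succ k ih =>
      simp only [Function.iterate_succ_apply']
      rw [← ih.2]
      exact hH t _ ih.1
  set N : ℂ × ℂ → ℂ × ℂ := fun p => (H p.1)^[m] (p.2, 1) with hN
  set G : ℂ × ℂ → ℂ := fun p => (N p).1 / (N p).2 with hGdef
  have hGiter : ∀ t z, G (t, z) = toC ((f t)^[m] (z : Sphere)) := by
    intro t z
    rw [← ofHom_coe z, ← (hiter m t (z, 1) (by simp)).2, toC_ofHom]
  have hNC : ContDiffAt ℂ 1 N (t₀, x) :=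
    ContDiffAt.comp (t₀, x) (g := fun y : ℂ × (ℂ × ℂ) => (H y.1)^[m] y.2)
      (f := fun p : ℂ × ℂ => (p.1, (p.2, (1 : ℂ)))) (contDiffAt_iterate hC m _) (by fun_prop)
  have hden : (N (t₀, x)).2 ≠ 0 := by
    intro h
    have h1 := (hiter m t₀ (x, 1) (by simp)).2
    have h2 := hfa.self_of_nhds
    rw [ofHom_coe, ← ha0, h2, ha0] at h1
    simp only [hN] at h
    simp [ofHom, h] at h1
  have hGC : ContDiffAt ℂ 1 G (t₀, x) := hNC.fst.div hNC.snd hden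
  have hstrict := hGC.hasStrictFDerivAt one_ne_zero
  refine eventually_eq_of_fixed hstrict ?_ ha hb ha0 hb0 ?_ ?_
  · have hline : HasDerivAt (fun z : ℂ => ((t₀, z) : ℂ × ℂ)) (0, 1) x :=
      (hasDerivAt_const x t₀).prodMk (hasDerivAt_id x)
    have hcomp := hstrict.hasFDerivAt.comp_hasDerivAt x hline
    have heq : (G ∘ fun z : ℂ => ((t₀, z) : ℂ × ℂ)) = iterC (f t₀) m := by
      ext z
      exact hGiter t₀ z
    rw [heq] at hcomp
    rwa [← hcomp.deriv]
  · filter_upwards [hfa] with t ht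
    rw [hGiter, ht, toC_coe]
  · filter_upwards [hfb] with t ht
    rw [hGiter, ht, toC_coe]

/-- Local uniqueness of the continuation of a periodic point of a rational map with only hyperbolic
periodic points. -/
theorem RatMap.eventually_eq_of_periodic {d : ℕ} (hd : d ≠ 0) {F : ℂ → RatMap d} {t₀ : ℂ}
    (hp : ∀ i, ContDiffAt ℂ 1 (fun t => (F t).p.coeff i) t₀)
    (hq : ∀ i, ContDiffAt ℂ 1 (fun t => (F t).q.coeff i) t₀)
    (hyp : HypPeriodic (F t₀).toFun) {m : ℕ} (hm : 0 < m) {u v : ℂ → Sphere}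
    (hu : ContinuousAt u t₀) (hv : ContinuousAt v t₀) (huv : u t₀ = v t₀)
    (hfu : ∀ᶠ t in 𝓝 t₀, (F t).toFun^[m] (u t) = u t)
    (hfv : ∀ᶠ t in 𝓝 t₀, (F t).toFun^[m] (v t) = v t) : ∀ᶠ t in 𝓝 t₀, u t = v t := by
  have hmult := hyp (u t₀) ⟨m, hm, hfu.self_of_nhds⟩ m hm hfu.self_of_nhds
  have hlift := contDiffAt_homLift hp hq
  by_cases hinf : u t₀ = ∞
  · have hu0 : ∀ᶠ t in 𝓝 t₀, u t ≠ ((0 : ℂ) : Sphere) := hu.eventually_ne (by simp [hinf])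
    have hv0 : ∀ᶠ t in 𝓝 t₀, v t ≠ ((0 : ℂ) : Sphere) := hv.eventually_ne (by simp [← huv, hinf])
    have hcoe : ∀ y : Sphere, y ≠ ((0 : ℂ) : Sphere) → ((toC (sphInv y) : ℂ) : Sphere) = sphInv y :=
      fun y hy => coe_toC fun h => hy (by rw [← sphInv_involutive y, h, sphInv_infty])
    have hsemi : ∀ f : Sphere → Sphere, Function.Semiconj sphInv f (conjInv f) := by
      intro f y
      simp only [conjInv, Function.comp_apply, sphInv_involutive y]
    have hfix : ∀ w : ℂ → Sphere, (∀ᶠ t in 𝓝 t₀, w t ≠ ((0 : ℂ) : Sphere)) →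
        (∀ᶠ t in 𝓝 t₀, (F t).toFun^[m] (w t) = w t) →
        ∀ᶠ t in 𝓝 t₀, (conjInv (F t).toFun)^[m] ((toC (sphInv (w t)) : ℂ) : Sphere) =
          ((toC (sphInv (w t)) : ℂ) : Sphere) := by
      intro w hw0 hfw
      filter_upwards [hw0, hfw] with t h0 hf
      rw [hcoe _ h0, ← ((hsemi (F t).toFun).iterate_right m).eq, hf]
    have key := _root_.eventually_eq_of_periodic (f := fun t => conjInv (F t).toFun)
      (H := fun t w => ((F t).homLift w.swap).swap) (t₀ := t₀) (x := 0) (m := m)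
      (a := fun t => toC (sphInv (u t))) (b := fun t => toC (sphInv (v t)))
      (fun t w hw => by
        have hw' : w.swap ≠ 0 := fun h => hw (by rw [← Prod.swap_swap w, h]; rfl)
        obtain ⟨h1, h2⟩ := (F t).homLift_spec hd hw'
        refine ⟨fun h => h1 (by rw [← Prod.swap_swap (homLift _ _), h]; rfl), ?_⟩
        rw [ofHom_swap h1, h2, ofHom_swap hw]
        rfl)
      (fun w => by
        have h1 := hlift w.swap
        have h2 : ContDiffAt ℂ 1 (fun y : ℂ × (ℂ × ℂ) => (F y.1).homLift y.2.swap) (t₀, w) :=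
          ContDiffAt.comp (t₀, w) (g := fun y : ℂ × (ℂ × ℂ) => (F y.1).homLift y.2)
            (f := fun y : ℂ × (ℂ × ℂ) => (y.1, y.2.swap)) h1
            (contDiffAt_fst.prodMk (contDiffAt_snd.snd.prodMk contDiffAt_snd.fst))
        exact h2.snd.prodMk h2.fst)
      (ContinuousAt.comp (g := toC ∘ sphInv) (by rw [hinf]; exact continuousAt_toC_sphInv_infty) hu)
      (ContinuousAt.comp (g := toC ∘ sphInv)
        (by rw [← huv, hinf]; exact continuousAt_toC_sphInv_infty) hv)
      (by simp [hinf]) (by simp [← huv, hinf]) (hfix u hu0 hfu) (hfix v hv0 hfv)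
      (fun h => hmult.1 hinf (by rw [h, norm_one]))
    filter_upwards [key, hu0, hv0] with t ht hut hvt
    apply sphInv_involutive.injective
    rw [← hcoe _ hut, ← hcoe _ hvt, ht]
  · have hcont : ContinuousAt toC (u t₀) := by
      rw [← coe_toC hinf]
      exact continuousAt_toC _
    have hu0 : ∀ᶠ t in 𝓝 t₀, u t ≠ ∞ := hu.eventually_ne hinf
    have hv0 : ∀ᶠ t in 𝓝 t₀, v t ≠ ∞ := hv.eventually_ne (huv ▸ hinf)
    have key := _root_.eventually_eq_of_periodic (f := fun t => (F t).toFun)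
      (H := fun t => (F t).homLift) (t₀ := t₀) (x := toC (u t₀)) (m := m)
      (a := fun t => toC (u t)) (b := fun t => toC (v t))
      (fun t w hw => (F t).homLift_spec hd hw) hlift
      (ContinuousAt.comp (g := toC) hcont hu) (ContinuousAt.comp (g := toC) (huv ▸ hcont) hv)
      rfl (by rw [huv])
      (by
        filter_upwards [hu0, hfu] with t h0 hf
        rw [coe_toC h0, hf])
      (by
        filter_upwards [hv0, hfv] with t h0 hf
        rw [coe_toC h0, hf])
      (fun h => hmult.2 hinf (by rw [h, norm_one]))
    filter_upwards [key, hu0, hv0] with t ht hut hvt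
    rw [← coe_toC hut, ← coe_toC hvt, ht]

/-- Two continuous continuations of periodic points over a disk of maps with only hyperbolic
periodic points coincide as soon as they meet. -/
theorem RatMap.eqOn_of_periodic {d : ℕ} (hd : d ≠ 0) {F : ℂ → RatMap d} {s : Set ℂ}
    (hs : IsOpen s) (hconn : IsPreconnected s)
    (hp : ∀ i, ∀ t ∈ s, ContDiffAt ℂ 1 (fun t => (F t).p.coeff i) t)
    (hq : ∀ i, ∀ t ∈ s, ContDiffAt ℂ 1 (fun t => (F t).q.coeff i) t)
    (hyp : ∀ t ∈ s, HypPeriodic (F t).toFun) {m : ℕ} (hm : 0 < m) {u v : ℂ → Sphere}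
    (hu : ContinuousOn u s) (hv : ContinuousOn v s)
    (hfu : ∀ t ∈ s, (F t).toFun^[m] (u t) = u t)
    (hfv : ∀ t ∈ s, (F t).toFun^[m] (v t) = v t) {t₁ : ℂ} (ht₁ : t₁ ∈ s) (huv : u t₁ = v t₁) :
    EqOn u v s := by
  have hsub : s ⊆ {t | ∀ᶠ x in 𝓝 t, u x = v x} := by
    refine hconn.subset_of_closure_inter_subset isOpen_setOfPred_eventually_nhds
      ⟨t₁, ht₁, ?_⟩ ?_
    · exact RatMap.eventually_eq_of_periodic hd (fun i => hp i t₁ ht₁) (fun i => hq i t₁ ht₁)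
        (hyp t₁ ht₁) hm (hu.continuousAt (hs.mem_nhds ht₁)) (hv.continuousAt (hs.mem_nhds ht₁)) huv
        (eventually_of_mem (hs.mem_nhds ht₁) hfu) (eventually_of_mem (hs.mem_nhds ht₁) hfv)
    · rintro t ⟨htc, ht⟩
      have hut := hu.continuousAt (hs.mem_nhds ht)
      have hvt := hv.continuousAt (hs.mem_nhds ht)
      have heq : u t = v t := by
        have hfreq : ∃ᶠ x in 𝓝 t, u x = v x :=
          (mem_closure_iff_frequently.1 htc).mono fun x hx => hx.self_of_nhds
        by_contra hne
        exact hfreq ((hut.prodMk hvt).tendsto (isClosed_diagonal.isOpen_compl.mem_nhds hne))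
      exact RatMap.eventually_eq_of_periodic hd (fun i => hp i t ht) (fun i => hq i t ht)
        (hyp t ht) hm hut hvt heq
        (eventually_of_mem (hs.mem_nhds ht) hfu) (eventually_of_mem (hs.mem_nhds ht) hfv)
  exact fun t ht => (hsub ht).self_of_nhds

/-- The restriction of a sphere-valued holomorphic map to a complex line has local holomorphic
lifts. -/
theorem HoloSphere.hasHoloLift {n : ℕ} {φ : (Fin n → ℂ) → Sphere} {s : Set (Fin n → ℂ)}
    (hs : IsOpen s) (hφ : HoloSphere φ s) (l : Fin n → ℂ) {t : ℂ} (ht : t • l ∈ s) :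
    HasHoloLift (fun x => φ (x • l)) t := by
  have hline : DifferentiableAt ℂ (fun x : ℂ => x • l) t := by fun_prop
  have hcont : ContinuousAt (fun x : ℂ => φ (x • l)) t :=
    ContinuousAt.comp (f := fun x : ℂ => x • l) (hφ.1.continuousAt (hs.mem_nhds ht))
      hline.continuousAt
  by_cases hinf : φ (t • l) = ∞
  · have hd := ((hφ.2 _ ht).2 hinf).differentiableAt (hs.mem_nhds ht)
    refine ⟨fun x => (1, (toC ∘ sphInv ∘ φ) (x • l)),
      (differentiableAt_const _).prodMk (DifferentiableAt.comp (g := toC ∘ sphInv ∘ φ)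
        (f := fun x : ℂ => x • l) t hd hline), ?_⟩
    filter_upwards [hcont.eventually_ne (y := ((0 : ℂ) : Sphere)) (by simp [hinf])] with x hx
    refine ⟨by simp, ?_⟩
    simp only [Function.comp_apply]
    generalize φ (x • l) = y at hx
    induction y using OnePoint.rec with
    | infty => simp [ofHom]
    | coe z =>
      have hz : z ≠ 0 := fun h => hx (by rw [h])
      simp [ofHom, sphInv_coe hz, hz]
  · have hd := ((hφ.2 _ ht).1 hinf).differentiableAt (hs.mem_nhds ht)
    refine ⟨fun x => ((toC ∘ φ) (x • l), 1),
      (DifferentiableAt.comp (g := toC ∘ φ) (f := fun x : ℂ => x • l) t hd hline).prodMk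
        (differentiableAt_const _), ?_⟩
    filter_upwards [hcont.eventually_ne hinf] with x hx
    exact ⟨by simp, by rw [ofHom_coe, Function.comp_apply, coe_toC hx]⟩

theorem isOpen_polydisk (n : ℕ) : IsOpen (polydisk n) := by
  have : polydisk n = ⋂ i, {l : Fin n → ℂ | ‖l i‖ < 1} := by
    ext
    simp [polydisk]
  rw [this]
  exact isOpen_iInter_of_finite fun i => isOpen_lt (by fun_prop) continuous_const

theorem WeaklyStable.hypPeriodic {d : ℕ} {F : RatMap d} (h : WeaklyStable F) :
    HypPeriodic F.toFun := by
  obtain ⟨δ, hδ, hF⟩ := h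
  exact hF F fun i => by simp [hδ.le]

/-- **The λ-lemma of Mañé–Sad–Sullivan and Lyubich.**  Let `(f_λ)_{λ ∈ 𝔻ⁿ}` be a
weakly stable holomorphic family of rational maps of degree `d ≥ 2` of the Riemann
sphere.  Then the holomorphic motion is well defined at every point `p₀` of the closure
`J*₀` of the set of periodic points of `f₀`: for every sequence of periodic points
`pₙ → p₀` of `f₀`, the corresponding holomorphic continuations `λ ↦ pₙ(λ)` converge. -/
theorem lambda_lemma_rational_maps
    {d n : ℕ} (hd : 2 ≤ d)
    (F : (Fin n → ℂ) → RatMap d)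
    (hholo : HoloFamily F)
    (hws : ∀ l ∈ polydisk n, WeaklyStable (F l)) :
    ∀ p₀ ∈ closure (Function.periodicPts (F 0).toFun),
      ∀ pn : ℕ → Sphere,
        (∀ k, pn k ∈ Function.periodicPts (F 0).toFun) →
        Tendsto pn atTop (𝓝 p₀) →
        ∀ φ : ℕ → (Fin n → ℂ) → Sphere,
          (∀ k, φ k 0 = pn k ∧ HoloSphere (φ k) (polydisk n) ∧
            ∀ l ∈ polydisk n, ∀ m : ℕ, 0 < m →
              (F 0).toFun^[m] (pn k) = pn k → (F l).toFun^[m] (φ k l) = φ k l) →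
          ∃ Φ : (Fin n → ℂ) → Sphere,
            ∀ l ∈ polydisk n, Tendsto (fun k => φ k l) atTop (𝓝 (Φ l)) := by
  intro p₀ _ pn hpn hlim φ hφ
  suffices h : ∀ l ∈ polydisk n, ∃ x, Tendsto (fun k => φ k l) atTop (𝓝 x) by
    choose! Φ hΦ using h
    exact ⟨Φ, hΦ⟩
  intro l hl
  have hl1 : ‖l‖ < 1 := (pi_norm_lt_iff one_pos).2 hl
  obtain ⟨R, hR1, hRl⟩ : ∃ R : ℝ, 1 < R ∧ R * ‖l‖ < 1 := by
    have : Tendsto (fun R : ℝ => R * ‖l‖) (𝓝[>] 1) (𝓝 (1 * ‖l‖)) :=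
      (continuous_mul_const _).continuousAt.tendsto.mono_left nhdsWithin_le_nhds
    obtain ⟨R, hR⟩ := ((this.eventually_lt_const (by simpa using hl1)).and
      self_mem_nhdsWithin).exists
    exact ⟨R, hR.2, hR.1⟩
  have hmaps : ∀ t ∈ Metric.ball (0 : ℂ) R, t • l ∈ polydisk n := by
    intro t ht
    have h1 : ‖t • l‖ < 1 := by
      rw [norm_smul]
      refine lt_of_le_of_lt ?_ hRl
      gcongr
      exact (mem_ball_zero_iff.1 ht).le
    exact fun i => (norm_le_pi_norm _ i).trans_lt h1
  have hcoeff : ∀ c : (Fin n → ℂ) → ℂ, DifferentiableOn ℂ c (polydisk n) →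
      ∀ t ∈ Metric.ball (0 : ℂ) R, ContDiffAt ℂ 1 (fun t : ℂ => c (t • l)) t := by
    intro c hc t ht
    have hd : DifferentiableOn ℂ (fun t : ℂ => c (t • l)) (Metric.ball 0 R) :=
      hc.comp (by fun_prop) hmaps
    exact (hd.contDiffOn Metric.isOpen_ball).contDiffAt (Metric.isOpen_ball.mem_nhds ht)
  obtain ⟨x, hx⟩ := exists_tendsto_of_disjoint_sphere_graphs (u := fun k t => φ k (t • l))
    (R := R) (p := p₀) (t := 1)
    (fun k t ht => (hφ k).2.1.hasHoloLift (isOpen_polydisk n) l (hmaps t ht))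
    (fun j k ⟨t₁, ht₁, heq⟩ => by
      obtain ⟨a, ha, hpa⟩ := hpn j
      obtain ⟨b, hb, hpb⟩ := hpn k
      have hcont : ∀ i, ContinuousOn (fun t : ℂ => φ i (t • l)) (Metric.ball 0 R) := fun i =>
        (hφ i).2.1.1.comp (by fun_prop) hmaps
      exact RatMap.eqOn_of_periodic (by lia) (F := fun t : ℂ => F (t • l)) Metric.isOpen_ball
        (convex_ball (0 : ℂ) R).isPreconnected
        (fun i => hcoeff _ (hholo i).1) (fun i => hcoeff _ (hholo i).2)
        (fun t ht => (hws _ (hmaps t ht)).hypPeriodic) (Nat.mul_pos ha hb) (hcont j) (hcont k)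
        (fun t ht => (hφ j).2.2 _ (hmaps t ht) _ (Nat.mul_pos ha hb) (hpa.mul_const b))
        (fun t ht => (hφ k).2.2 _ (hmaps t ht) _ (Nat.mul_pos ha hb) (hpb.const_mul a))
        ht₁ heq)
    (by simpa [(hφ _).1] using hlim) (by simpa using hR1)
  exact ⟨x, by simpa using hx⟩
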